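/- Let d ∈ ℕ, p ∈ ℕ₀, C > 0, h ∈ [1, ∞], and let a : K → ℝ be (p+1, C)-smooth w.r.t. the norm |·|_h on a convex set K ⊆ ℝ^d. For z in the interior of K, let a_p(·; z) denote the Taylor polynomial of a of degree p around z, i.e. a_p(x; z) = Σ_{n=0}^p (1/n!) Σ_{l_1+…+l_d = n} (n choose l_1,…,l_d) (∂^n a(z)/∂x_1^{l_1}⋯∂x_d^{l_d}) Π_{i=1}^d (x_i − z_i)^{l_i}. Then for all x ∈ K, |a(x) − a_p(x; z)| ≤ ( C / (p+1)! ) · |x − z|_h^{p+1} · d^{p(1 − 1/h)}. -/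

import Mathlib

open scoped ENNReal

/-- The `|·|_h` norm on `ℝ^d`, `h ∈ [1,∞]`: `|x|_h = (Σ|x_i|^h)^{1/h}`, `|x|_∞ = max |x_i|`. -/
noncomputable def pnorm (d : ℕ) (h : ℝ≥0∞) (x : Fin d → ℝ) : ℝ :=
  if h = ∞ then ⨆ i, |x i| else (∑ i, |x i| ^ h.toReal) ^ (1 / h.toReal)

/-- The partial derivative in the `i`-th coordinate. -/
noncomputable def partialDerivCoord (d : ℕ) (i : Fin d) (g : (Fin d → ℝ) → ℝ) :
    (Fin d → ℝ) → ℝ :=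
  fun x => deriv (fun t => g (Function.update x i t)) (x i)

/-- The multi-index partial derivative `∂_α = Π_i (∂/∂x_i)^{α_i}`. -/
noncomputable def partialDerivMulti (d : ℕ) (α : Fin d → ℕ) (g : (Fin d → ℝ) → ℝ) :
    (Fin d → ℝ) → ℝ :=
  (List.finRange d).foldr (fun i g' => (partialDerivCoord d i)^[α i] g') g


lemma pdc_eq {d : ℕ} (i : Fin d) {g : (Fin d → ℝ) → ℝ} (hg : Differentiable ℝ g) :
    partialDerivCoord d i g = fun x => fderiv ℝ g x (Pi.single i 1) := by
  funext x
  unfold partialDerivCoord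
  have h1 : HasDerivAt (fun t => Function.update x i t) (Pi.single i (1 : ℝ)) (x i) :=
    hasDerivAt_update x i (x i)
  have h2 : HasFDerivAt g (fderiv ℝ g x) (Function.update x i (x i)) := by
    rw [Function.update_eq_self]
    exact (hg x).hasFDerivAt
  exact (h2.comp_hasDerivAt (x i) h1).deriv

lemma pdc_contDiff {d : ℕ} (i : Fin d) {g : (Fin d → ℝ) → ℝ} {m : ℕ}
    (hg : ContDiff ℝ ((m + 1 : ℕ) : ℕ∞) g) : ContDiff ℝ (m : ℕ∞) (partialDerivCoord d i g) := by
  have hd : Differentiable ℝ g := hg.differentiable (by simp)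
  rw [pdc_eq i hd]
  have : ContDiff ℝ (m : ℕ∞) (fderiv ℝ g) := hg.fderiv_right (by simp)
  exact this.clm_apply contDiff_const

lemma pdc_comm {d : ℕ} (i j : Fin d) {g : (Fin d → ℝ) → ℝ}
    (hg : ContDiff ℝ ((2 : ℕ) : ℕ∞) g) :
    partialDerivCoord d i (partialDerivCoord d j g)
      = partialDerivCoord d j (partialDerivCoord d i g) := by
  have hd : Differentiable ℝ g := hg.differentiable (by simp)
  have hi : Differentiable ℝ (partialDerivCoord d i g) :=
    (pdc_contDiff (m := 1) i hg).differentiable (by simp)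
  have hj : Differentiable ℝ (partialDerivCoord d j g) :=
    (pdc_contDiff (m := 1) j hg).differentiable (by simp)
  have hf : Differentiable ℝ (fderiv ℝ g) := by
    have : ContDiff ℝ ((1 : ℕ) : ℕ∞) (fderiv ℝ g) := hg.fderiv_right (by norm_num)
    exact this.differentiable (by simp)
  rw [pdc_eq i hj, pdc_eq j hi, pdc_eq i hd, pdc_eq j hd]
  funext x
  have key : ∀ u w : Fin d → ℝ, fderiv ℝ (fun y => fderiv ℝ g y u) x w
      = fderiv ℝ (fderiv ℝ g) x w u := by
    intro u w
    rw [fderiv_clm_apply (hf x) (differentiableAt_const u)]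
    simp
  rw [key, key]
  exact second_derivative_symmetric (fun y => (hd y).hasFDerivAt) (hf x).hasFDerivAt _ _

lemma pdc_iter_contDiff {d : ℕ} (i : Fin d) (k : ℕ) : ∀ {g : (Fin d → ℝ) → ℝ} {m : ℕ}
    (_ : ContDiff ℝ ((m + k : ℕ) : ℕ∞) g),
    ContDiff ℝ (m : ℕ∞) ((partialDerivCoord d i)^[k] g) := by
  induction k with
  | zero => intro g m hg; simpa using hg
  | succ k ih =>
    intro g m hg
    rw [Function.iterate_succ_apply]
    exact ih (pdc_contDiff i hg)

lemma pdc_iter_comm {d : ℕ} (i j : Fin d) (k : ℕ) : ∀ {g : (Fin d → ℝ) → ℝ}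
    (_ : ContDiff ℝ ((k + 1 : ℕ) : ℕ∞) g),
    partialDerivCoord d i ((partialDerivCoord d j)^[k] g)
      = (partialDerivCoord d j)^[k] (partialDerivCoord d i g) := by
  induction k with
  | zero => intro g hg; rfl
  | succ k ih =>
    intro g hg
    rw [Function.iterate_succ_apply, Function.iterate_succ_apply, ih (pdc_contDiff j hg),
      pdc_comm i j (hg.of_le (by norm_cast; omega))]

lemma foldr_contDiff {d : ℕ} (α : Fin d → ℕ) {g : (Fin d → ℝ) → ℝ} (L : List (Fin d)) :
    ∀ {m : ℕ}, ContDiff ℝ ((m + (L.map α).sum : ℕ) : ℕ∞) g →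
    ContDiff ℝ (m : ℕ∞) (L.foldr (fun i g' => (partialDerivCoord d i)^[α i] g') g) := by
  induction L with
  | nil => intro m hg; simpa using hg
  | cons j L ih =>
    intro m hg
    rw [List.foldr_cons]
    apply pdc_iter_contDiff
    apply ih
    rw [List.map_cons, List.sum_cons] at hg
    rwa [add_assoc]

lemma foldr_notMem {d : ℕ} (α : Fin d → ℕ) (i : Fin d) {g : (Fin d → ℝ) → ℝ} (L : List (Fin d))
    (hi : i ∉ L) :
    L.foldr (fun j g' => (partialDerivCoord d j)^[(α + Pi.single i 1 : Fin d → ℕ) j] g') g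
     = L.foldr (fun j g' => (partialDerivCoord d j)^[α j] g') g := by
  induction L with
  | nil => rfl
  | cons j L ih =>
    simp only [List.mem_cons, not_or] at hi
    rw [List.foldr_cons, List.foldr_cons, ih hi.2]
    simp [Pi.single_apply, Ne.symm hi.1]

lemma foldr_pdc {d : ℕ} (α : Fin d → ℕ) (i : Fin d) {g : (Fin d → ℝ) → ℝ} (L : List (Fin d))
    (hn : L.Nodup) (hi : i ∈ L) (hg : ContDiff ℝ (((L.map α).sum + 1 : ℕ) : ℕ∞) g) :
    partialDerivCoord d i (L.foldr (fun j g' => (partialDerivCoord d j)^[α j] g') g)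
     = L.foldr (fun j g' => (partialDerivCoord d j)^[(α + Pi.single i 1 : Fin d → ℕ) j] g') g := by
  induction L with
  | nil => simp at hi
  | cons j L ih =>
    rw [List.nodup_cons] at hn
    rw [List.map_cons, List.sum_cons] at hg
    rw [List.foldr_cons, List.foldr_cons]
    by_cases hij : i = j
    · subst hij
      rw [foldr_notMem α i L hn.1, ← Function.iterate_succ_apply' (partialDerivCoord d i)]
      simp
    · have hi' : i ∈ L := by simpa [hij] using hi
      rw [pdc_iter_comm, ih hn.2 hi']
      · simp [Pi.single_apply, Ne.symm hij]
      · exact hg.of_le (by norm_cast; omega)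
      · apply foldr_contDiff
        exact hg.of_le (by norm_cast; omega)

lemma pdm_contDiff {d : ℕ} (α : Fin d → ℕ) {g : (Fin d → ℝ) → ℝ} {m : ℕ}
    (hg : ContDiff ℝ ((m + ∑ i, α i : ℕ) : ℕ∞) g) :
    ContDiff ℝ (m : ℕ∞) (partialDerivMulti d α g) := by
  apply foldr_contDiff
  rwa [← List.ofFn_eq_map, List.sum_ofFn]

lemma pdm_pdc {d : ℕ} (α : Fin d → ℕ) (i : Fin d) {g : (Fin d → ℝ) → ℝ}
    (hg : ContDiff ℝ ((∑ i, α i + 1 : ℕ) : ℕ∞) g) :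
    partialDerivCoord d i (partialDerivMulti d α g)
      = partialDerivMulti d (α + Pi.single i 1) g := by
  apply foldr_pdc _ _ _ (List.nodup_finRange d) (List.mem_finRange i)
  rwa [← List.ofFn_eq_map, List.sum_ofFn]

/-- coefficient -/
noncomputable def tcoef {d : ℕ} (v : Fin d → ℝ) (l : Fin d → ℕ) : ℝ :=
  ∏ i, v i ^ l i / (Nat.factorial (l i) : ℝ)

lemma tcoef_succ {d : ℕ} (v : Fin d → ℝ) (l : Fin d → ℕ) (i : Fin d) :
    tcoef v (l + Pi.single i 1) * ((l i : ℝ) + 1) = tcoef v l * v i := by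
  unfold tcoef
  rw [← Finset.mul_prod_erase _ _ (Finset.mem_univ i),
    ← Finset.mul_prod_erase Finset.univ (fun i => v i ^ l i / (Nat.factorial (l i) : ℝ))
      (Finset.mem_univ i)]
  have : ∏ x ∈ Finset.univ.erase i, v x ^ (l + Pi.single i 1 : Fin d → ℕ) x /
        (Nat.factorial ((l + Pi.single i 1 : Fin d → ℕ) x) : ℝ)
      = ∏ x ∈ Finset.univ.erase i, v x ^ l x / (Nat.factorial (l x) : ℝ) := by
    apply Finset.prod_congr rfl
    intro x hx
    simp [Pi.single_apply, Finset.ne_of_mem_erase hx]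
  rw [this]
  simp only [Pi.add_apply, Pi.single_eq_same, Nat.factorial_succ, pow_succ]
  push_cast
  have : (Nat.factorial (l i) : ℝ) ≠ 0 := by positivity
  have : (l i : ℝ) + 1 ≠ 0 := by positivity
  field_simp

lemma sum_shift {d : ℕ} (v : Fin d → ℝ) (n : ℕ) (F : (Fin d → ℕ) → ℝ) :
    ∑ l ∈ Finset.piAntidiag Finset.univ n, tcoef v l * ∑ i, v i * F (l + Pi.single i 1)
     = (n + 1) * ∑ l ∈ Finset.piAntidiag Finset.univ (n + 1), tcoef v l * F l := by
  have hR : (n + 1 : ℝ) * ∑ l ∈ Finset.piAntidiag Finset.univ (n + 1), tcoef v l * F l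
     = ∑ l ∈ Finset.piAntidiag Finset.univ (n + 1), ∑ i : Fin d, (l i : ℝ) * (tcoef v l * F l) := by
    rw [Finset.mul_sum]
    apply Finset.sum_congr rfl
    intro l hl
    rw [← Finset.sum_mul]
    congr 1
    have := (Finset.mem_piAntidiag.1 hl).1
    rw [← Nat.cast_sum, this]
    push_cast; rfl
  rw [hR]
  simp_rw [Finset.mul_sum]
  rw [Finset.sum_comm, Finset.sum_comm (s := Finset.piAntidiag Finset.univ (n + 1))]
  apply Finset.sum_congr rfl
  intro i _
  apply Finset.sum_bij_ne_zero (fun l _ _ => l + Pi.single i 1)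
  · intro l hl _
    simp only [Finset.mem_piAntidiag] at hl ⊢
    simp [Finset.sum_add_distrib, hl.1]
  · intro l _ _ l' _ _ h
    exact add_right_cancel h
  · intro l hl hne
    have hli : l i ≠ 0 := by
      intro h0; simp [h0] at hne
    have hle : l - Pi.single i 1 + Pi.single i 1 = l := by
      apply tsub_add_cancel_of_le
      intro j
      by_cases hj : j = i
      · subst hj; simp; omega
      · simp [hj]
    have hmem : l - Pi.single i 1 ∈ Finset.piAntidiag (Finset.univ : Finset (Fin d)) n := by
      simp only [Finset.mem_piAntidiag] at hl ⊢
      refine ⟨?_, by simp⟩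
      have h1 := hl.1
      rw [← hle] at h1
      simp only [Pi.add_apply, Finset.sum_add_distrib, Finset.sum_pi_single',
        Finset.mem_univ, if_true] at h1
      simpa using h1
    refine ⟨l - Pi.single i 1, hmem, ?_, hle⟩
    have := tcoef_succ v (l - Pi.single i 1) i
    rw [hle] at this ⊢
    rw [← mul_assoc, ← this]
    intro h0
    apply hne
    have h2 : (((l - Pi.single i 1 : Fin d → ℕ) i : ℝ) + 1) = l i := by
      have := congrFun hle i
      simp only [Pi.add_apply, Pi.single_eq_same] at this
      exact_mod_cast this
    rw [h2] at h0
    linarith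
  · intro l hl _
    have := tcoef_succ v l i
    simp only [Pi.add_apply, Pi.single_eq_same]
    push_cast
    rw [← mul_assoc, ← this]
    ring

/-- homogeneous Taylor part -/
noncomputable def tpart {d : ℕ} (a : (Fin d → ℝ) → ℝ) (v : Fin d → ℝ) (n : ℕ)
    (y : Fin d → ℝ) : ℝ :=
  ∑ l ∈ Finset.piAntidiag Finset.univ n, tcoef v l * partialDerivMulti d l a y

lemma tpart_hasDerivAt {d : ℕ} {a : (Fin d → ℝ) → ℝ} (v z : Fin d → ℝ) (n : ℕ)
    (ha : ContDiff ℝ ((n + 1 : ℕ) : ℕ∞) a) (t : ℝ) :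
    HasDerivAt (fun t : ℝ => tpart a v n (z + t • v))
      ((n + 1) * tpart a v (n + 1) (z + t • v)) t := by
  unfold tpart
  rw [← sum_shift v n (fun l => partialDerivMulti d l a (z + t • v))]
  apply HasDerivAt.fun_sum
  intro l hl
  apply HasDerivAt.const_mul
  have hs := (Finset.mem_piAntidiag.1 hl).1
  have hc : ContDiff ℝ ((1 : ℕ) : ℕ∞) (partialDerivMulti d l a) := by
    apply pdm_contDiff
    rwa [hs, add_comm]
  have hdf : Differentiable ℝ (partialDerivMulti d l a) := hc.differentiable (by simp)
  have h1 : HasDerivAt (fun t : ℝ => z + t • v) v t := by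
    simpa using ((hasDerivAt_id t).smul_const v).const_add z
  have h2 := (hdf (z + t • v)).hasFDerivAt.comp_hasDerivAt t h1
  refine h2.congr_deriv ?_
  have hv : v = ∑ i, v i • (Pi.single i (1 : ℝ) : Fin d → ℝ) := by
    simpa using (pi_eq_sum_univ' v)
  have hsum : fderiv ℝ (partialDerivMulti d l a) (z + t • v) v
      = ∑ i, fderiv ℝ (partialDerivMulti d l a) (z + t • v) (v i • Pi.single i (1 : ℝ)) := by
    rw [← map_sum, ← hv]
  refine hsum.trans ?_
  apply Finset.sum_congr rfl
  intro i _
  rw [map_smul, smul_eq_mul, ← pdm_pdc l i (by rwa [hs]), pdc_eq i hdf]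

lemma tcoef_sum {d : ℕ} (v : Fin d → ℝ) (n : ℕ) :
    ∑ l ∈ Finset.piAntidiag Finset.univ n, tcoef v l = (∑ i, v i) ^ n / (Nat.factorial n : ℝ) := by
  induction n with
  | zero => simp [tcoef]
  | succ n ih =>
    have := sum_shift v n (fun _ => 1)
    simp only [mul_one] at this
    rw [← Finset.sum_mul, ih] at this
    rw [Nat.factorial_succ]
    push_cast
    have h1 : (n : ℝ) + 1 ≠ 0 := by positivity
    have h2 : (Nat.factorial n : ℝ) ≠ 0 := by positivity
    field_simp at this ⊢
    rw [pow_succ]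
    linarith

lemma scalar_taylor (p : ℕ) : ∀ (g : ℕ → ℝ → ℝ) (M : ℝ)
    (_ : ∀ n < p, ∀ t, HasDerivAt (g n) (g (n + 1) t) t)
    (_ : ∀ t ∈ Set.Icc (0 : ℝ) 1, |g p t - g p 0| ≤ M * t),
    ∀ t ∈ Set.Icc (0 : ℝ) 1,
      |g 0 t - ∑ n ∈ Finset.range (p + 1), g n 0 * (t ^ n / (Nat.factorial n : ℝ))|
        ≤ M * (t ^ (p + 1) / (Nat.factorial (p + 1) : ℝ)) := by
  induction p with
  | zero => intro g M _ h t ht; simpa using h t ht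
  | succ p ih =>
    intro g M hg hM
    have IH := ih (fun n => g (n + 1)) M (fun n hn t => hg (n + 1) (by omega) t) hM
    have hpow : ∀ (n : ℕ) (t : ℝ), HasDerivAt (fun t : ℝ => t ^ (n + 1) / (Nat.factorial (n + 1) : ℝ))
        (t ^ n / (Nat.factorial n : ℝ)) t := by
      intro n t
      have := (hasDerivAt_pow (n + 1) t).div_const (Nat.factorial (n + 1) : ℝ)
      refine this.congr_deriv ?_
      rw [Nat.factorial_succ]
      push_cast
      have h1 : (n : ℝ) + 1 ≠ 0 := by positivity
      have h2 : (Nat.factorial n : ℝ) ≠ 0 := by positivity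
      field_simp
    have hf : ∀ t, HasDerivAt
        (fun t => g 0 t - ∑ n ∈ Finset.range (p + 1 + 1), g n 0 * (t ^ n / (Nat.factorial n : ℝ)))
        (g 1 t - ∑ n ∈ Finset.range (p + 1), g (n + 1) 0 * (t ^ n / (Nat.factorial n : ℝ))) t := by
      intro t
      apply HasDerivAt.fun_sub (hg 0 (by omega) t)
      simp_rw [Finset.sum_range_succ' _ (p + 1)]
      simp only [pow_zero]
      apply HasDerivAt.add_const
      apply HasDerivAt.fun_sum
      intro n _
      exact (hpow n t).const_mul _
    have := image_norm_le_of_norm_deriv_right_le_deriv_boundary (a := (0 : ℝ)) (b := 1)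
      (B := fun t => M * (t ^ (p + 1 + 1) / (Nat.factorial (p + 1 + 1) : ℝ)))
      (B' := fun t => M * (t ^ (p + 1) / (Nat.factorial (p + 1) : ℝ)))
      (fun t _ => (hf t).continuousAt.continuousWithinAt)
      (fun t _ => (hf t).hasDerivWithinAt)
      (by simp [Finset.sum_range_succ']) (fun t => (hpow (p + 1) t).const_mul M)
      (fun t ht => IH t ⟨ht.1, ht.2.le⟩)
    intro t ht
    exact this ht

lemma pnorm_nonneg {d : ℕ} (h : ℝ≥0∞) (v : Fin d → ℝ) : 0 ≤ pnorm d h v := by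
  unfold pnorm
  split_ifs
  · exact Real.iSup_nonneg fun i => abs_nonneg _
  · positivity

lemma pnorm_smul {d : ℕ} (h : ℝ≥0∞) (hh : 1 ≤ h) (v : Fin d → ℝ) (t : ℝ) (ht : 0 ≤ t) :
    pnorm d h (t • v) = t * pnorm d h v := by
  unfold pnorm
  split_ifs with hi
  · simp only [Pi.smul_apply, smul_eq_mul, abs_mul, abs_of_nonneg ht]
    rw [Real.mul_iSup_of_nonneg ht]
  · have hpos : 0 < h.toReal := ENNReal.toReal_pos (by rintro rfl; simp at hh) hi
    simp only [Pi.smul_apply, smul_eq_mul, abs_mul, abs_of_nonneg ht]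
    simp_rw [Real.mul_rpow ht (abs_nonneg _)]
    rw [← Finset.mul_sum, Real.mul_rpow (by positivity) (by positivity), ← Real.rpow_mul ht,
      mul_one_div_cancel hpos.ne', Real.rpow_one]

lemma sum_le_pnorm {d : ℕ} (hd : 0 < d) (h : ℝ≥0∞) (hh : 1 ≤ h) (v : Fin d → ℝ) :
    ∑ i, |v i| ≤ pnorm d h v * (d : ℝ) ^ (1 - (h⁻¹).toReal) := by
  unfold pnorm
  split_ifs with hi
  · subst hi
    have : ∑ i, |v i| ≤ ∑ _i : Fin d, ⨆ i, |v i| :=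
      Finset.sum_le_sum fun i _ => le_ciSup (f := fun i => |v i|) (Set.finite_range _).bddAbove i
    simpa [mul_comm] using this
  · have hpos : 0 < h.toReal := ENNReal.toReal_pos (by rintro rfl; simp at hh) hi
    have h1 : 1 ≤ h.toReal := by
      simpa using ENNReal.toReal_mono hi hh
    have key := Real.rpow_sum_le_const_mul_sum_rpow (s := Finset.univ) v h1
    have hS : 0 ≤ ∑ i, |v i| := by positivity
    have k2 := Real.rpow_le_rpow (by positivity) key (z := 1 / h.toReal) (by positivity)
    rw [← Real.rpow_mul hS, mul_one_div_cancel hpos.ne', Real.rpow_one,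
      Real.mul_rpow (by positivity) (by positivity), ← Real.rpow_mul (by positivity)] at k2
    rw [ENNReal.toReal_inv, mul_comm]
    convert k2 using 3
    · simp
    · field_simp

/-- Taylor remainder estimate inside Lemma 7.1: for a `(p+1,C)`-smooth function (w.r.t. `|·|_h`)
on a convex set `K` and `z` in the interior of `K`, the degree-`p` Taylor polynomial `a_p(·;z)`
satisfies `|a(x) − a_p(x;z)| ≤ (C/(p+1)!) |x−z|_h^{p+1} d^{p(1−1/h)}` for all `x ∈ K`. -/
theorem taylor_remainder_bound_hnorm
    (d : ℕ) (hd : 0 < d) (p : ℕ) (C : ℝ) (hC : 0 < C) (h : ℝ≥0∞) (hh : 1 ≤ h)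
    (K : Set (Fin d → ℝ)) (hK : Convex ℝ K) (a : (Fin d → ℝ) → ℝ)
    (hsmooth : ContDiff ℝ (p : ℕ∞) a)
    (hlip : ∀ α : Fin d → ℕ, (∑ i, α i) = p →
      ∀ x ∈ K, ∀ y ∈ K,
        |partialDerivMulti d α a x - partialDerivMulti d α a y| ≤ C * pnorm d h (x - y))
    (z : Fin d → ℝ) (hz : z ∈ interior K) :
    ∀ x ∈ K,
      |a x -
          ∑ l ∈ (Fintype.piFinset fun _ : Fin d => Finset.range (p + 1)).filter
              (fun l => ∑ i, l i ≤ p),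
            (∏ i, (x i - z i) ^ l i / (Nat.factorial (l i) : ℝ)) *
              partialDerivMulti d l a z| ≤
        C / (Nat.factorial (p + 1) : ℝ) * pnorm d h (x - z) ^ (p + 1) *
          (d : ℝ) ^ ((p : ℝ) * (1 - (h⁻¹).toReal)) := by
  intro x hx
  set v : Fin d → ℝ := x - z with hv
  have hzK : z ∈ K := interior_subset hz
  set S : ℝ := ∑ i, |v i| with hS
  have hS0 : 0 ≤ S := by positivity
  have hN0 := pnorm_nonneg h v
  set N : ℝ := pnorm d h v with hN
  have hder : ∀ n < p, ∀ t, HasDerivAt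
      (fun t : ℝ => (Nat.factorial n : ℝ) * tpart a v n (z + t • v))
      ((Nat.factorial (n + 1) : ℝ) * tpart a v (n + 1) (z + t • v)) t := by
    intro n hn t
    have := (tpart_hasDerivAt v z n (hsmooth.of_le (by norm_cast)) t).const_mul
      (Nat.factorial n : ℝ)
    refine this.congr_deriv ?_
    rw [Nat.factorial_succ]
    push_cast
    ring
  have hbd : ∀ t ∈ Set.Icc (0 : ℝ) 1,
      |(Nat.factorial p : ℝ) * tpart a v p (z + t • v)
        - (Nat.factorial p : ℝ) * tpart a v p (z + (0 : ℝ) • v)| ≤ (C * N * S ^ p) * t := by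
    intro t ht
    have hy : z + t • v ∈ K := hK.add_smul_sub_mem hzK hx ht
    have hT : |tpart a v p (z + t • v) - tpart a v p z| ≤
        ∑ l ∈ Finset.piAntidiag Finset.univ p, tcoef (fun i => |v i|) l * (C * (t * N)) := by
      unfold tpart
      rw [← Finset.sum_sub_distrib]
      refine (Finset.abs_sum_le_sum_abs _ _).trans (Finset.sum_le_sum fun l hl => ?_)
      rw [← mul_sub, abs_mul]
      have e1 : |tcoef v l| = tcoef (fun i => |v i|) l := by
        unfold tcoef
        rw [Finset.abs_prod]
        simp [abs_div, abs_pow]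
      rw [e1]
      have e2 := hlip l (Finset.mem_piAntidiag.1 hl).1 _ hy _ hzK
      rw [add_sub_cancel_left, pnorm_smul h hh v t ht.1] at e2
      apply mul_le_mul_of_nonneg_left e2
      unfold tcoef
      positivity
    rw [← Finset.sum_mul, tcoef_sum] at hT
    rw [zero_smul, add_zero, ← mul_sub, abs_mul, abs_of_nonneg (by positivity)]
    have hf : (0 : ℝ) < Nat.factorial p := by positivity
    calc (Nat.factorial p : ℝ) * |tpart a v p (z + t • v) - tpart a v p z|
        ≤ Nat.factorial p * (S ^ p / Nat.factorial p * (C * (t * N))) := by gcongr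
      _ = (C * N * S ^ p) * t := by field_simp
  have main := scalar_taylor p
    (fun n t => (Nat.factorial n : ℝ) * tpart a v n (z + t • v)) (C * N * S ^ p) hder hbd 1
    (by simp)
  have hsum : ∑ l ∈ (Fintype.piFinset fun _ : Fin d => Finset.range (p + 1)).filter
              (fun l => ∑ i, l i ≤ p),
            (∏ i, (x i - z i) ^ l i / (Nat.factorial (l i) : ℝ)) *
              partialDerivMulti d l a z = ∑ n ∈ Finset.range (p + 1), tpart a v n z := by
    rw [← Finset.sum_fiberwise_of_maps_to (g := fun l : Fin d → ℕ => ∑ i, l i)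
      (t := Finset.range (p + 1))]
    · apply Finset.sum_congr rfl
      intro n hn
      unfold tpart tcoef
      apply Finset.sum_congr
      · ext l
        simp only [Finset.mem_filter, Fintype.mem_piFinset, Finset.mem_range,
          Finset.mem_piAntidiag] at hn ⊢
        constructor
        · rintro ⟨_, h2⟩
          exact ⟨h2, by simp⟩
        · rintro ⟨h2, _⟩
          change ∑ i, l i = n at h2
          refine ⟨⟨fun i => ?_, by omega⟩, h2⟩
          have : l i ≤ ∑ i, l i := Finset.single_le_sum (f := l) (fun _ _ => Nat.zero_le _) (Finset.mem_univ i)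
          omega
      · intro l _
        rfl
    · intro l hl
      simp only [Finset.mem_filter, Finset.mem_range] at hl ⊢
      omega
  rw [hsum]
  have h0 : tpart a v 0 x = a x := by
    have : (List.finRange d).foldr
        (fun i g' => (partialDerivCoord d i)^[(0 : Fin d → ℕ) i] g') a = a := by
      simp
    simp [tpart, tcoef, partialDerivMulti]
  have hxz : z + (1 : ℝ) • v = x := by simp [hv]
  have main2 : |a x - ∑ n ∈ Finset.range (p + 1), tpart a v n z|
      ≤ C * N * S ^ p * (1 / (Nat.factorial (p + 1) : ℝ)) := by
    convert main using 2
    · simp only [Nat.factorial_zero, Nat.cast_one, one_mul, hxz, h0, zero_smul, add_zero, one_pow]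
      congr 2
      funext n
      have : (Nat.factorial n : ℝ) ≠ 0 := by positivity
      field_simp
    · simp
  refine main2.trans ?_
  have hSN : S ^ p ≤ (N * (d : ℝ) ^ (1 - (h⁻¹).toReal)) ^ p :=
    pow_le_pow_left₀ hS0 (sum_le_pnorm hd h hh v) p
  have hdp : (d : ℝ) ^ ((p : ℝ) * (1 - (h⁻¹).toReal)) = ((d : ℝ) ^ (1 - (h⁻¹).toReal)) ^ p := by
    rw [mul_comm, Real.rpow_mul (by positivity), Real.rpow_natCast]
  rw [hdp]
  calc C * N * S ^ p * (1 / (Nat.factorial (p + 1) : ℝ))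
      ≤ C * N * (N * (d : ℝ) ^ (1 - (h⁻¹).toReal)) ^ p * (1 / (Nat.factorial (p + 1) : ℝ)) := by
        gcongr
    _ = _ := by rw [mul_pow]; ring
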